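/- arXiv:2109.06002 — 2 statements merged into one kernel-verified Lean document; each statement's English description precedes it below -/
import Mathlib

section
/- Let (X,d) be a complete CAT(0) space satisfying the geodesic extension property. Then (X,d) is locally compact if and only if (X,d) satisfies the finite set property and for every compact set K ⊆ X the closure of its convex hull cl co K is compact. -/
/-!
In a complete locally compact geodesic space closed balls are compact (Hopf-Rinow). In a `CAT(0)`
space balls are convex, so the closed convex hull of a compact set is then closed and bounded, hence
compact. For the finite set property at `x`, let `S` be the union of `{x}` and a finite `1`-net of
the closed ball of radius `4`, and let `C` be its closed convex hull. If some `y` with `d(x,y) < 1`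
were outside `C`, let `p` be a point of `C` nearest to `y`, so that `d(x,p) < 2`, and prolong the
geodesic from `p` to `y` to a point `z` with `d(p,z) = 2`. The angle at `p` between `[p,y]` and
`[p,c]` is at least `π/2` for every `c` in `S`, so `d(z,c) ≥ d(z,p) = 2` (`two_sides_le_of_nearest`
and `dist_le_of_right_angle`). But `z` lies in the ball of radius `4`, so some `c` in `S` is at
distance less than `1` from `z`.

Conversely, a finite set is compact, so the finite set property gives each point a compact
neighbourhood.
-/

open Set

/-- A geodesic from `x` to `y`: an isometric parametrization of `[0, d(x,y)]`. -/
def IsGeodesic {X : Type*} [MetricSpace X] (x y : X) (γ : ℝ → X) : Prop :=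
  γ 0 = x ∧ γ (dist x y) = y ∧
    ∀ s ∈ Set.Icc (0 : ℝ) (dist x y), ∀ t ∈ Set.Icc (0 : ℝ) (dist x y),
      dist (γ s) (γ t) = |s - t|

/-- The union of all geodesic segments from `x` to `y` (in a uniquely geodesic
space this is the geodesic segment `[x,y]`). -/
def segs {X : Type*} [MetricSpace X] (x y : X) : Set X :=
  ⋃ γ ∈ {γ : ℝ → X | IsGeodesic x y γ}, γ '' Set.Icc (0 : ℝ) (dist x y)

/-- A geodesic metric space: every two points are joined by a geodesic. -/
def GeodesicSpace (X : Type*) [MetricSpace X] : Prop :=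
  ∀ x y : X, ∃ γ : ℝ → X, IsGeodesic x y γ

/-- A uniquely geodesic metric space. -/
def UniquelyGeodesic (X : Type*) [MetricSpace X] : Prop :=
  GeodesicSpace X ∧ ∀ (x y : X) (γ₁ γ₂ : ℝ → X), IsGeodesic x y γ₁ → IsGeodesic x y γ₂ →
    Set.EqOn γ₁ γ₂ (Set.Icc (0 : ℝ) (dist x y))

/-- A CAT(0) space: a geodesic space satisfying the quadratic comparison inequality. -/
def CAT0 (X : Type*) [MetricSpace X] : Prop :=
  GeodesicSpace X ∧
    ∀ (x y z : X) (γ : ℝ → X), IsGeodesic x y γ → ∀ t ∈ Set.Icc (0 : ℝ) 1,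
      dist (γ (t * dist x y)) z ^ 2 ≤
        (1 - t) * dist x z ^ 2 + t * dist y z ^ 2 - t * (1 - t) * dist x y ^ 2

/-- A flat CAT(0) space: the comparison inequality holds with equality. -/
def FlatCAT0 (X : Type*) [MetricSpace X] : Prop :=
  GeodesicSpace X ∧
    ∀ (x y z : X) (γ : ℝ → X), IsGeodesic x y γ → ∀ t ∈ Set.Icc (0 : ℝ) 1,
      dist (γ (t * dist x y)) z ^ 2 =
        (1 - t) * dist x z ^ 2 + t * dist y z ^ 2 - t * (1 - t) * dist x y ^ 2

/-- Convexity: a set containing every geodesic segment between its points. -/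
def GConvex {X : Type*} [MetricSpace X] (C : Set X) : Prop :=
  ∀ x ∈ C, ∀ y ∈ C, segs x y ⊆ C

/-- The (geodesic) convex hull: the smallest convex set containing `S`. -/
def gconvHull {X : Type*} [MetricSpace X] (S : Set X) : Set X :=
  ⋂₀ {C : Set X | GConvex C ∧ S ⊆ C}

/-- Threading of a set: the union of all geodesic segments with endpoints in `S`. -/
def thr {X : Type*} [MetricSpace X] (S : Set X) : Set X :=
  ⋃ x ∈ S, ⋃ y ∈ S, segs x y

/-- The geodesic extension property: every geodesic extends to a strictly longer geodesic. -/
def GeodesicExtension (X : Type*) [MetricSpace X] : Prop :=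
  ∀ (x y : X) (γ : ℝ → X), IsGeodesic x y γ →
    ∃ ε > (0 : ℝ), ∃ (y' : X) (γ' : ℝ → X), IsGeodesic x y' γ' ∧
      dist x y' = dist x y + ε ∧ Set.EqOn γ' γ (Set.Icc (0 : ℝ) (dist x y))

/-- The finite set property: every point has an open neighborhood contained in the
closed convex hull of some finite set. -/
def FiniteSetProperty (X : Type*) [MetricSpace X] : Prop :=
  ∀ x : X, ∃ U : Set X, IsOpen U ∧ x ∈ U ∧
    ∃ S : Set X, S.Finite ∧ U ⊆ closure (gconvHull S)

section Geodesics

variable {X : Type*} [MetricSpace X]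

/-! ### Geodesic segments and convexity -/

theorem exists_mem_segs (hg : GeodesicSpace X) (x y : X) {s : ℝ} (h0 : 0 ≤ s)
    (h1 : s ≤ dist x y) :
    ∃ w ∈ segs x y, dist x w = s ∧ dist w y = dist x y - s := by
  obtain ⟨γ, hγ⟩ := hg x y
  refine ⟨γ s, ?_, ?_, ?_⟩
  · simp only [segs, mem_iUnion]
    exact ⟨γ, hγ, s, ⟨h0, h1⟩, rfl⟩
  · have := hγ.2.2 0 ⟨le_rfl, dist_nonneg⟩ s ⟨h0, h1⟩
    rwa [hγ.1, zero_sub, abs_neg, abs_of_nonneg h0] at this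
  · have := hγ.2.2 s ⟨h0, h1⟩ (dist x y) ⟨dist_nonneg, le_rfl⟩
    rwa [hγ.2.1, abs_sub_comm, abs_of_nonneg (by linarith)] at this

theorem dist_add_of_mem_segs {x y w : X} (hw : w ∈ segs x y) :
    dist x w + dist w y = dist x y := by
  simp only [segs, mem_iUnion] at hw
  obtain ⟨γ, hγ, s, hs, rfl⟩ := hw
  have h1 := hγ.2.2 0 ⟨le_rfl, dist_nonneg⟩ s hs
  have h2 := hγ.2.2 s hs (dist x y) ⟨dist_nonneg, le_rfl⟩
  rw [hγ.1, zero_sub, abs_neg, abs_of_nonneg hs.1] at h1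
  rw [hγ.2.1, abs_sub_comm, abs_of_nonneg (by linarith [hs.2])] at h2
  linarith

/-- The `CAT(0)` inequality in Stewart's form, for any point `y` metrically between `p` and `z`.
Such a point lies on every geodesic from `p` to `z`, by the `CAT(0)` inequality applied to `y`
itself. -/
theorem CAT0.stewart (hX : CAT0 X) {p y z : X} (h : dist p y + dist y z = dist p z) (c : X) :
    dist p z * dist y c ^ 2 ≤ dist y z * dist p c ^ 2 + dist p y * dist z c ^ 2
      - dist p y * dist y z * dist p z := by
  obtain ⟨γ, hγ⟩ := hX.1 p z
  have hpy : 0 ≤ dist p y := dist_nonneg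
  have hyz : 0 ≤ dist y z := dist_nonneg
  rcases (dist_nonneg : 0 ≤ dist p z).eq_or_lt with hD | hD
  · have h1 : dist p y = 0 := by linarith
    have h2 : dist y z = 0 := by linarith
    simp [h1, h2, ← hD]
  · have hD' := hD.ne'
    set t := dist p y / dist p z with ht
    have htD : t * dist p z = dist p y := div_mul_cancel₀ _ hD'
    have ht1 : (1 - t) * dist p z = dist y z := by linarith
    have htI : t ∈ Icc (0 : ℝ) 1 :=
      ⟨by positivity, by rw [ht, div_le_one hD]; linarith⟩
    have hy : γ (t * dist p z) = y := by
      have := hX.2 p z y γ hγ t htI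
      have h0 : (1 - t) * dist p y ^ 2 + t * dist z y ^ 2 - t * (1 - t) * dist p z ^ 2 = 0 := by
        rw [dist_comm z y, ← ht1, ← htD]; ring
      rw [h0] at this
      exact dist_eq_zero.1 (pow_eq_zero_iff two_ne_zero |>.1 (le_antisymm this (sq_nonneg _)))
    have := hX.2 p z c γ hγ t htI
    rw [hy] at this
    have := mul_le_mul_of_nonneg_left this hD.le
    calc _ ≤ _ := this
      _ = _ := by rw [← ht1, ← htD]; ring

theorem gconvex_gconvHull (S : Set X) : GConvex (gconvHull S) := fun x hx y hy _ hw C hC =>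
  hC.1 x (hx C hC) y (hy C hC) hw

theorem subset_gconvHull (S : Set X) : S ⊆ gconvHull S := fun _ hx _ hC => hC.2 hx

theorem CAT0.gconvex_closedBall (hX : CAT0 X) (x : X) (r : ℝ) :
    GConvex (Metric.closedBall x r) := by
  intro a ha b hb w hw
  rw [Metric.mem_closedBall] at *
  have hr : 0 ≤ r := dist_nonneg.trans ha
  have hadd := dist_add_of_mem_segs hw
  rcases (dist_nonneg : 0 ≤ dist a b).eq_or_lt with hD | hD
  · have : dist a w = 0 := by
      linarith [(dist_nonneg : 0 ≤ dist a w), (dist_nonneg : 0 ≤ dist w b)]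
    rwa [← dist_eq_zero.1 this]
  · have h := hX.stewart hadd x
    have ha2 : dist a x ^ 2 ≤ r ^ 2 := by gcongr
    have hb2 : dist b x ^ 2 ≤ r ^ 2 := by gcongr
    have h1 : dist w b * dist a x ^ 2 ≤ dist w b * r ^ 2 := by gcongr
    have h2 : dist a w * dist b x ^ 2 ≤ dist a w * r ^ 2 := by gcongr
    have h3 : 0 ≤ dist a w * dist w b * dist a b := by positivity
    have h4 : dist a b * dist w x ^ 2 ≤ dist a b * r ^ 2 := by rw [← hadd] at *; linarith
    exact (sq_le_sq₀ dist_nonneg hr).1 (le_of_mul_le_mul_left h4 hD)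

/-! ### Compactness of balls and prolongation of geodesics -/

/-- **Hopf-Rinow**: a complete locally compact geodesic space is proper. -/
theorem GeodesicSpace.properSpace [CompleteSpace X] [LocallyCompactSpace X]
    (hg : GeodesicSpace X) : ProperSpace X := by
  -- A ball is within `δ` of the concentric ball whose radius is smaller by `δ`.
  have key : ∀ (x : X) (r δ : ℝ), 0 ≤ r → 0 ≤ δ →
      Metric.closedBall x (r + δ) ⊆ Metric.cthickening δ (Metric.closedBall x r) := by
    intro x r δ hr hδ w hw
    rw [Metric.mem_closedBall'] at hw
    obtain ⟨v, -, hv1, hv2⟩ := exists_mem_segs hg x w (s := min r (dist x w))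
      (le_min hr dist_nonneg) (min_le_right _ _)
    refine Metric.mem_cthickening_of_dist_le w v δ _ (Metric.mem_closedBall'.2 ?_) ?_
    · rw [hv1]; exact min_le_left _ _
    · rw [dist_comm, hv2]
      rcases min_cases r (dist x w) with h | h <;> linarith
  refine ⟨fun x => ?_⟩
  set A : Set ℝ := {r | 0 ≤ r ∧ IsCompact (Metric.closedBall x r)} with hA
  have down : ∀ r ∈ A, ∀ s ≤ r, IsCompact (Metric.closedBall x s) := fun r hr s hs =>
    hr.2.of_isClosed_subset Metric.isClosed_closedBall (Metric.closedBall_subset_closedBall hs)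
  have h0 : (0 : ℝ) ∈ A := ⟨le_rfl, by simp⟩
  by_contra hcon
  push Not at hcon
  obtain ⟨R, hR⟩ := hcon
  have hbd : BddAbove A := ⟨R, fun r hr => le_of_not_ge fun h => hR (down r hr R h)⟩
  have hρ0 : 0 ≤ sSup A := le_csSup hbd h0
  have hlt : ∀ s < sSup A, IsCompact (Metric.closedBall x s) := by
    intro s hs
    obtain ⟨r, hr, hsr⟩ := exists_lt_of_lt_csSup ⟨0, h0⟩ hs
    exact down r hr s hsr.le
  have hρ : sSup A ∈ A := by
    rcases hρ0.eq_or_lt with h | h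
    · rwa [← h]
    refine ⟨hρ0, TotallyBounded.isCompact_of_isClosed ?_ Metric.isClosed_closedBall⟩
    rw [Metric.totallyBounded_iff]
    intro ε hε
    set δ := min (ε / 2) (sSup A) with hδ
    have hδ0 : 0 < δ := lt_min (by positivity) h
    have hc := hlt (sSup A - δ) (by linarith)
    obtain ⟨t, ht, hcov⟩ := Metric.totallyBounded_iff.1 hc.totallyBounded (ε / 2) (by positivity)
    refine ⟨t, ht, fun w hw => ?_⟩
    have hw' : w ∈ Metric.closedBall x (sSup A - δ + δ) := by simpa using hw
    have := key x (sSup A - δ) δ (by linarith [min_le_right (ε / 2) (sSup A)]) hδ0.le hw'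
    rw [hc.cthickening_eq_biUnion_closedBall hδ0.le] at this
    simp only [mem_iUnion] at this
    obtain ⟨v, hv, hwv⟩ := this
    have := hcov hv
    simp only [mem_iUnion] at this ⊢
    obtain ⟨c, hc, hvc⟩ := this
    refine ⟨c, hc, ?_⟩
    rw [Metric.mem_ball] at *
    rw [Metric.mem_closedBall] at hwv
    linarith [dist_triangle w v c, min_le_left (ε / 2) (sSup A)]
  obtain ⟨δ, hδ, hcomp⟩ := hρ.2.exists_isCompact_cthickening
  have : sSup A + δ ∈ A := ⟨by linarith,
    hcomp.of_isClosed_subset Metric.isClosed_closedBall (key x _ δ hρ0 hδ.le)⟩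
  linarith [le_csSup hbd this]

/-- A geodesic from `p` through `y` can be prolonged to any length `L ≥ d(p,y)`. -/
theorem exists_prolongation [ProperSpace X] (hg : GeodesicSpace X) (hext : GeodesicExtension X)
    (p y : X) {L : ℝ} (hL : dist p y ≤ L) :
    ∃ z, dist p y + dist y z = dist p z ∧ dist p z = L := by
  -- The longest prolongation inside the closed ball of radius `L` reaches its boundary.
  set E : Set X := {z | dist p y + dist y z = dist p z} ∩ Metric.closedBall p L with hE
  have hcl : IsClosed {z | dist p y + dist y z = dist p z} :=
    isClosed_eq (by fun_prop) (by fun_prop)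
  have hEc : IsCompact E := (isCompact_closedBall p L).inter_left hcl
  obtain ⟨z, ⟨hz, hzL⟩, hmax⟩ := hEc.exists_isMaxOn
    ⟨y, by simp, Metric.mem_closedBall'.2 hL⟩ (f := fun z => dist p z) (by fun_prop)
  rw [Metric.mem_closedBall'] at hzL
  refine ⟨z, hz, hzL.antisymm (le_of_not_gt fun hlt => ?_)⟩
  obtain ⟨γ, hγ⟩ := hg p z
  obtain ⟨ε, hε, z', γ', hγ', hd, heq⟩ := hext p z γ hγ
  set δ := min ε (L - dist p z) with hδ
  have hδ0 : 0 < δ := lt_min hε (by linarith)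
  have hδε : δ ≤ ε := min_le_left _ _
  have hδL : δ ≤ L - dist p z := min_le_right _ _
  have hpz : 0 ≤ dist p z := dist_nonneg
  have hz' : γ' (dist p z) = z := by rw [heq ⟨hpz, le_rfl⟩, hγ.2.1]
  have m1 : dist p z + δ ∈ Icc (0 : ℝ) (dist p z') := ⟨by linarith, by linarith⟩
  have h1 := hγ'.2.2 0 ⟨le_rfl, dist_nonneg⟩ _ m1
  have h2 := hγ'.2.2 (dist p z) ⟨hpz, by linarith⟩ _ m1
  rw [hγ'.1, zero_sub, abs_neg, abs_of_nonneg m1.1] at h1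
  rw [hz', sub_add_cancel_left, abs_neg, abs_of_pos hδ0] at h2
  set w := γ' (dist p z + δ)
  have hw : w ∈ E := by
    refine ⟨?_, Metric.mem_closedBall'.2 (by linarith)⟩
    have hz2 : dist p y + dist y z = dist p z := hz
    show dist p y + dist y w = dist p w
    linarith [dist_triangle p y w, dist_triangle y z w]
  have : dist p w ≤ dist p z := hmax hw
  linarith

/-! ### Nearest points and the finite set property -/

/-- If `p` is a point of the closure of a convex set nearest to `y`, then the angle at `p` between
`y` and any point `c` of the set is at least `π/2`. -/
theorem two_sides_le_of_nearest (hX : CAT0 X) {H : Set X} (hH : GConvex H) {p y c : X}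
    (hp : p ∈ closure H) (hmin : ∀ q ∈ H, dist y p ≤ dist y q) (hc : c ∈ H) :
    dist p y ^ 2 + dist p c ^ 2 ≤ dist y c ^ 2 := by
  have key : ∀ s ∈ Ioo (0 : ℝ) 1, dist y p ^ 2 ≤
      (1 - s) * dist p y ^ 2 + s * dist c y ^ 2 - s * (1 - s) * dist p c ^ 2 := by
    intro s hs
    have hcl : IsClosed {q | dist y p ^ 2 ≤
        (1 - s) * dist q y ^ 2 + s * dist c y ^ 2 - s * (1 - s) * dist q c ^ 2} :=
      isClosed_le (by fun_prop) (by fun_prop)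
    refine closure_minimal (fun q hq => ?_) hcl hp
    obtain ⟨γ, hγ⟩ := hX.1 q c
    have hqc : 0 ≤ dist q c := dist_nonneg
    have hmem : γ (s * dist q c) ∈ H := by
      apply hH q hq c hc
      simp only [segs, mem_iUnion]
      exact ⟨γ, hγ, _, ⟨mul_nonneg hs.1.le hqc, mul_le_of_le_one_left hqc hs.2.le⟩, rfl⟩
    have h1 := hmin _ hmem
    have h2 := hX.2 q c y γ hγ s ⟨hs.1.le, hs.2.le⟩
    have h3 : dist y p ^ 2 ≤ dist y (γ (s * dist q c)) ^ 2 := by gcongr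
    rw [dist_comm y (γ _)] at h3
    exact h3.trans h2
  rw [dist_comm y c]
  simp only [dist_comm y p] at key
  -- Dividing by `s` leaves `a ≤ b - (1 - s) e`; let `s` tend to `0`.
  generalize dist p y ^ 2 = a at *
  generalize dist c y ^ 2 = b at *
  have he : 0 ≤ dist p c ^ 2 := sq_nonneg _
  generalize dist p c ^ 2 = e at *
  have key' : ∀ s ∈ Ioo (0 : ℝ) 1, a ≤ b - (1 - s) * e := fun s hs =>
    le_of_mul_le_mul_left (by linarith [key s hs]) hs.1
  have hlim : Filter.Tendsto (fun s : ℝ => b - (1 - s) * e) (nhdsWithin 0 (Ioi 0))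
      (nhds (b - (1 - 0) * e)) :=
    (Continuous.tendsto (by fun_prop) 0).mono_left nhdsWithin_le_nhds
  have := ge_of_tendsto hlim
    (Filter.mem_of_superset (Ioo_mem_nhdsGT (zero_lt_one (α := ℝ))) key')
  linarith

/-- If the angle at `p` between `y` and `c` is at least `π/2` and `z` lies beyond `y` on a geodesic
issuing from `p`, then `z` is no closer to `c` than to `p`. -/
theorem dist_le_of_right_angle (hX : CAT0 X) {p y z c : X}
    (hz : dist p y + dist y z = dist p z) (hpy : 0 < dist p y)
    (hc : dist p y ^ 2 + dist p c ^ 2 ≤ dist y c ^ 2) : dist p z ≤ dist z c := by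
  have h := hX.stewart hz c
  have h1 := mul_le_mul_of_nonneg_left hc (dist_nonneg : 0 ≤ dist p z)
  have h2 : dist p y * (dist p z ^ 2 + dist p c ^ 2) ≤ dist p y * dist z c ^ 2 := by
    rw [← hz] at *
    nlinarith
  have h3 := le_of_mul_le_mul_left h2 hpy
  exact (sq_le_sq₀ dist_nonneg dist_nonneg).1 (by linarith [sq_nonneg (dist p c)])

theorem CAT0.finiteSetProperty [ProperSpace X] (hX : CAT0 X) (hext : GeodesicExtension X) :
    FiniteSetProperty X := by
  intro x
  obtain ⟨t, ht, hcov⟩ := Metric.totallyBounded_iff.1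
    (isCompact_closedBall x 4).totallyBounded 1 one_pos
  refine ⟨Metric.ball x 1, Metric.isOpen_ball, Metric.mem_ball_self one_pos, insert x t,
    ht.insert x, fun y hy => ?_⟩
  rw [Metric.mem_ball'] at hy
  set H := gconvHull (insert x t) with hHdef
  have hxH : x ∈ H := subset_gconvHull _ (mem_insert _ _)
  obtain ⟨p, hp, hpd⟩ := isClosed_closure.exists_infDist_eq_dist ⟨x, subset_closure hxH⟩ y
  have hmin : ∀ q ∈ H, dist y p ≤ dist y q := fun q hq => by
    rw [← hpd]; exact Metric.infDist_le_dist_of_mem (subset_closure hq)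
  by_contra hyC
  have hpy : 0 < dist p y := dist_pos.2 fun h => hyC (h ▸ hp)
  have h1 := hmin x hxH
  rw [dist_comm y p, dist_comm y x] at h1
  obtain ⟨z, hz, hz2⟩ := exists_prolongation hX.1 hext p y (L := 2) (by linarith)
  have hzx : z ∈ Metric.closedBall x 4 := by
    rw [Metric.mem_closedBall']
    linarith [dist_triangle x p z, dist_triangle x y p, dist_comm y p]
  have := hcov hzx
  simp only [mem_iUnion] at this
  obtain ⟨c, hct, hzc⟩ := this
  rw [Metric.mem_ball] at hzc
  have hcH : c ∈ H := subset_gconvHull _ (mem_insert_of_mem _ hct)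
  linarith [dist_le_of_right_angle hX hz hpy
    (two_sides_le_of_nearest hX (gconvex_gconvHull _) hp hmin hcH)]

end Geodesics

/-- A complete CAT(0) space with the geodesic extension property is locally compact
iff it has the finite set property and closed convex hulls of compact sets are compact. -/
theorem locallyCompact_iff_finiteSetProperty {X : Type*} [MetricSpace X] [CompleteSpace X]
    (hX : CAT0 X) (hext : GeodesicExtension X) :
    LocallyCompactSpace X ↔
      (FiniteSetProperty X ∧
        ∀ K : Set X, IsCompact K → IsCompact (closure (gconvHull K))) := by
  constructor
  · intro hlc
    have := hX.1.properSpace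
    refine ⟨hX.finiteSetProperty hext, fun K hK => ?_⟩
    rcases K.eq_empty_or_nonempty with rfl | ⟨x, -⟩
    · have : gconvHull (∅ : Set X) = ∅ :=
        subset_empty_iff.1 (sInter_subset_of_mem ⟨fun x hx => hx.elim, Subset.rfl⟩)
      simp [this]
    · obtain ⟨r, hr⟩ := hK.isBounded.subset_closedBall x
      exact (isCompact_closedBall x r).of_isClosed_subset isClosed_closure
        (closure_minimal (sInter_subset_of_mem ⟨hX.gconvex_closedBall x r, hr⟩)
          Metric.isClosed_closedBall)
  · rintro ⟨hfin, hcomp⟩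
    have : WeaklyLocallyCompactSpace X := ⟨fun x => by
      obtain ⟨U, hU, hxU, S, hS, hUS⟩ := hfin x
      exact ⟨_, hcomp S hS.isCompact, Filter.mem_of_superset (hU.mem_nhds hxU) hUS⟩⟩
    infer_instance
end

section
/- Let (X,d) be a complete CAT(0) space. (i) If K ⊆ X is compact and its threading degree deg_thr K is finite, then the convex hull co K is compact. (ii) If X is of finite type, then co K is compact for every compact K ⊆ X. -/
/-!
Comparing two geodesics with the CAT(0) inequality bounds the distance between `γ (t * dist x y)`
and `γ' (t' * dist x' y')` by an expression that is continuous in `(t, x, y)` and vanishes at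
`(t', x', y')` (`CAT0.dist_sq_le`). Hence geodesics are unique, and the point at proportion `t`
along the geodesic from `x` to `y` depends continuously on `(t, x, y)`. The threading of `S` is
therefore the image of `[0, 1] × S × S` under a continuous map, so threading preserves
compactness; a convex hull that is a finite iterate of the threading of a compact set is compact.
-/

open Set

/-- The threading degree of a set: the smallest `n` with `thrⁿ S = co S` (or `⊤`). -/
noncomputable def thrDeg {X : Type*} [MetricSpace X] (S : Set X) : ℕ∞ :=
  sInf ((fun n : ℕ => (n : ℕ∞)) '' {n : ℕ | thr^[n] S = gconvHull S})

/-- The threading degree of the space: the supremum of the threading degrees of its subsets. -/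
noncomputable def thrDegSpace (X : Type*) [MetricSpace X] : ℕ∞ :=
  ⨆ S : Set X, thrDeg S

/-- A space is of finite type if its threading degree is finite. -/
def FiniteType (X : Type*) [MetricSpace X] : Prop := thrDegSpace X < ⊤

/-- The comparison bound between points on two geodesics: the CAT(0) inequality with
`z = γ' (t' * dist x' y')`, whose distances to `x` and `y` are estimated through `x'` and `y'`. -/
lemma CAT0.dist_sq_le {X : Type*} [MetricSpace X] (hX : CAT0 X) {x y x' y' : X} {γ γ' : ℝ → X}
    (hγ : IsGeodesic x y γ) (hγ' : IsGeodesic x' y' γ') {t t' : ℝ} (ht : t ∈ Icc (0 : ℝ) 1)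
    (ht' : t' ∈ Icc (0 : ℝ) 1) :
    dist (γ (t * dist x y)) (γ' (t' * dist x' y')) ^ 2 ≤
      (1 - t) * (dist x x' + t' * dist x' y') ^ 2 +
        t * (dist y y' + (1 - t') * dist x' y') ^ 2 - t * (1 - t) * dist x y ^ 2 := by
  obtain ⟨h0, h1, hd⟩ := hγ'
  have hD : 0 ≤ dist x' y' := dist_nonneg
  have hm : t' * dist x' y' ∈ Icc 0 (dist x' y') :=
    ⟨mul_nonneg ht'.1 hD, mul_le_of_le_one_left hD ht'.2⟩
  have hx : dist x' (γ' (t' * dist x' y')) = t' * dist x' y' := by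
    have h := hd 0 ⟨le_rfl, hD⟩ _ hm
    rwa [h0, zero_sub, abs_neg, abs_of_nonneg hm.1] at h
  have hy : dist y' (γ' (t' * dist x' y')) = (1 - t') * dist x' y' := by
    have h := hd _ ⟨hD, le_rfl⟩ _ hm
    rw [h1, abs_of_nonneg (sub_nonneg.2 hm.2)] at h
    rw [h]; ring
  have hxz := dist_triangle x x' (γ' (t' * dist x' y'))
  have hyz := dist_triangle y y' (γ' (t' * dist x' y'))
  rw [hx] at hxz
  rw [hy] at hyz
  have ht1 : 0 ≤ 1 - t := sub_nonneg.2 ht.2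
  have ht0 : 0 ≤ t := ht.1
  refine (hX.2 x y _ γ hγ t ht).trans ?_
  gcongr

/-- The point at proportion `t` along the chosen geodesic from `x` to `y`, as a function of
`(t, x, y)`. -/
noncomputable def geodPoint {X : Type*} [MetricSpace X] (hX : CAT0 X) (p : ℝ × X × X) : X :=
  (hX.1 p.2.1 p.2.2).choose (p.1 * dist p.2.1 p.2.2)

lemma continuousOn_geodPoint {X : Type*} [MetricSpace X] (hX : CAT0 X) :
    ContinuousOn (geodPoint hX) (Icc (0 : ℝ) 1 ×ˢ univ) := by
  intro q hq
  rw [ContinuousWithinAt, tendsto_iff_dist_tendsto_zero]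
  let B : ℝ × X × X → ℝ := fun p =>
    (1 - p.1) * (dist p.2.1 q.2.1 + q.1 * dist q.2.1 q.2.2) ^ 2 +
      p.1 * (dist p.2.2 q.2.2 + (1 - q.1) * dist q.2.1 q.2.2) ^ 2 -
        p.1 * (1 - p.1) * dist p.2.1 p.2.2 ^ 2
  have hB : Continuous fun p => √(B p) := by fun_prop
  have hBq : B q = 0 := by simp only [B, dist_self]; ring
  have hlim : Filter.Tendsto (fun p => √(B p)) (nhdsWithin q (Icc (0 : ℝ) 1 ×ˢ univ))
      (nhds 0) := by
    have h := hB.continuousWithinAt (s := Icc (0 : ℝ) 1 ×ˢ univ) (x := q)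
    rwa [ContinuousWithinAt, hBq, Real.sqrt_zero] at h
  refine squeeze_zero' (Filter.Eventually.of_forall fun _ => dist_nonneg) ?_ hlim
  filter_upwards [self_mem_nhdsWithin] with p hp
  exact Real.le_sqrt_of_sq_le
    (hX.dist_sq_le (hX.1 p.2.1 p.2.2).choose_spec (hX.1 q.2.1 q.2.2).choose_spec hp.1 hq.1)

/-- Every geodesic agrees with the chosen one. -/
lemma IsGeodesic.eq_geodPoint {X : Type*} [MetricSpace X] (hX : CAT0 X) {x y : X} {γ : ℝ → X}
    (hγ : IsGeodesic x y γ) {t : ℝ} (ht : t ∈ Icc (0 : ℝ) 1) :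
    γ (t * dist x y) = geodPoint hX (t, x, y) := by
  have h := hX.dist_sq_le hγ (hX.1 x y).choose_spec ht ht
  simp only [dist_self] at h
  have h0 : dist (γ (t * dist x y)) (geodPoint hX (t, x, y)) ^ 2 ≤ 0 :=
    h.trans (le_of_eq (by ring))
  exact dist_eq_zero.1 (pow_eq_zero_iff two_ne_zero |>.1 (le_antisymm h0 (sq_nonneg _)))

lemma thr_eq_image {X : Type*} [MetricSpace X] (hX : CAT0 X) (S : Set X) :
    thr S = geodPoint hX '' (Icc (0 : ℝ) 1 ×ˢ S ×ˢ S) := by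
  ext z
  simp only [thr, segs, mem_iUnion, mem_image, mem_ofPred_eq, exists_prop]
  constructor
  · rintro ⟨x, hx, y, hy, γ, hγ, s, hs, rfl⟩
    have ht : s / dist x y ∈ Icc (0 : ℝ) 1 :=
      ⟨div_nonneg hs.1 dist_nonneg, div_le_one_of_le₀ hs.2 dist_nonneg⟩
    refine ⟨(s / dist x y, x, y), ⟨ht, hx, hy⟩, ?_⟩
    rw [← hγ.eq_geodPoint hX ht]
    congr 1
    -- If `dist x y = 0` then `s = 0`, so the junk value of the quotient is harmless.
    exact div_mul_cancel_of_imp fun h => le_antisymm (h ▸ hs.2) hs.1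
  · rintro ⟨⟨t, x, y⟩, ⟨ht, hx, hy⟩, rfl⟩
    exact ⟨x, hx, y, hy, _, (hX.1 x y).choose_spec, t * dist x y,
      ⟨mul_nonneg ht.1 dist_nonneg, mul_le_of_le_one_left dist_nonneg ht.2⟩, rfl⟩

lemma isCompact_thr {X : Type*} [MetricSpace X] (hX : CAT0 X) {K : Set X} (hK : IsCompact K) :
    IsCompact (thr K) := by
  rw [thr_eq_image hX]
  exact (isCompact_Icc.prod (hK.prod hK)).image_of_continuousOn
    ((continuousOn_geodPoint hX).mono (prod_mono_right (subset_univ _)))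

/-- (i) A compact set of finite threading degree has compact convex hull.
(ii) In a space of finite type, every compact set has compact convex hull. -/
theorem convHull_compact_of_finite_thrDeg {X : Type*} [MetricSpace X] [CompleteSpace X]
    (hX : CAT0 X) :
    (∀ K : Set X, IsCompact K → thrDeg K < ⊤ → IsCompact (gconvHull K)) ∧
      (FiniteType X → ∀ K : Set X, IsCompact K → IsCompact (gconvHull K)) := by
  have key : ∀ K : Set X, IsCompact K → thrDeg K < ⊤ → IsCompact (gconvHull K) := by
    intro K hK h
    obtain ⟨_, ⟨n, hn, rfl⟩, hlt⟩ := sInf_lt_iff.1 h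
    rw [← show thr^[n] K = gconvHull K from hn]
    clear h hn hlt
    induction n with
    | zero => exact hK
    | succ n ih =>
      rw [Function.iterate_succ_apply']
      exact isCompact_thr hX ih
  exact ⟨key, fun hF K hK => key K hK ((le_iSup thrDeg K).trans_lt hF)⟩
end
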